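/- Let s ≥ 8. The code C_{(2,n,6,0)} has length n, dimension n − 8s − 1, and minimum distance exactly 6, and it is distance-optimal with respect to the sphere packing bound: every binary linear code of length n and dimension n − 8s − 1 has minimum distance at most 6. -/

import Mathlib

open Finset

/-- The binary cyclic (BCH-type) code of length `n` over GF(2), consisting of all
words `c` such that `∑ i, c i • β ^ (j * i) = 0` for every `j` in the check set `J`. -/
def BCHCode {F : Type} [Field F] [Algebra (ZMod 2) F] (n : ℕ) (β : F) (J : Finset ℕ) :
    Submodule (ZMod 2) (Fin n → ZMod 2) where
  carrier := {c | ∀ j ∈ J, ∑ i : Fin n, c i • β ^ (j * (i : ℕ)) = 0}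
  add_mem' := by
    intro a b ha hb j hj
    simp only [Set.mem_setOf_eq, Pi.add_apply, add_smul, Finset.sum_add_distrib] at *
    rw [ha j hj, hb j hj, add_zero]
  zero_mem' := by
    intro j hj
    simp
  smul_mem' := by
    intro r c hc j hj
    simp only [Set.mem_setOf_eq, Pi.smul_apply, smul_assoc, ← Finset.smul_sum] at *
    rw [hc j hj, smul_zero]

/-- The (Euclidean) dual of a binary linear code. -/
def dualCode {N : ℕ} (C : Submodule (ZMod 2) (Fin N → ZMod 2)) :
    Submodule (ZMod 2) (Fin N → ZMod 2) where
  carrier := {b | ∀ c ∈ C, ∑ i, b i * c i = 0}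
  add_mem' := by
    intro a b ha hb c hc
    simp only [Set.mem_setOf_eq, Pi.add_apply, add_mul, Finset.sum_add_distrib] at *
    rw [ha c hc, hb c hc, add_zero]
  zero_mem' := by
    intro c hc
    simp
  smul_mem' := by
    intro r b hb c hc
    simp only [Set.mem_setOf_eq, Pi.smul_apply, smul_eq_mul, mul_assoc, ← Finset.mul_sum] at *
    rw [hb c hc, mul_zero]

/-- The linear map appending an overall parity-check coordinate. -/
def extendMap (N : ℕ) : (Fin N → ZMod 2) →ₗ[ZMod 2] (Fin (N + 1) → ZMod 2) where
  toFun c := fun j => if h : (j : ℕ) < N then c ⟨j, h⟩ else ∑ i, c i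
  map_add' a b := by
    funext j
    by_cases h : (j : ℕ) < N <;> simp [h, Finset.sum_add_distrib]
  map_smul' r c := by
    funext j
    by_cases h : (j : ℕ) < N <;> simp [h, Finset.mul_sum]

/-- The extended code of a binary linear code. -/
def extendedCode {N : ℕ} (C : Submodule (ZMod 2) (Fin N → ZMod 2)) :
    Submodule (ZMod 2) (Fin (N + 1) → ZMod 2) :=
  C.map (extendMap N)

/-- The minimum distance (= minimum nonzero Hamming weight) of a binary linear code. -/
noncomputable def minDist {N : ℕ} (C : Submodule (ZMod 2) (Fin N → ZMod 2)) : ℕ :=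
  sInf {w | ∃ c ∈ C, c ≠ 0 ∧ hammingNorm c = w}

/-- The number of codewords of Hamming weight `w` in a binary linear code. -/
noncomputable def weightCount {N : ℕ} (C : Submodule (ZMod 2) (Fin N → ZMod 2)) (w : ℕ) : ℕ :=
  Set.ncard {c : Fin N → ZMod 2 | c ∈ C ∧ hammingNorm c = w}

/-- The 2-cyclotomic coset of `i` modulo `n`. -/
def cycCoset (n i : ℕ) : Set ℕ := {x | ∃ j : ℕ, x = i * 2 ^ j % n}

/-- The coset leader (smallest element) of the 2-cyclotomic coset of `i` modulo `n`. -/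
noncomputable def cosetLeader (n i : ℕ) : ℕ := sInf (cycCoset n i)

open Polynomial

/-!
The generator polynomial of the code is `(X - 1) * m₁ * m₃`, where `m₁` and `m₃` are the minimal
polynomials of `β` and `β ^ 3`: both have degree `4 * s`, and they differ because a conjugate of `β`
has the form `β ^ 2 ^ i`, while `3` is not a power of `2` modulo `2 ^ s - 1`. A codeword satisfies
five consecutive checks, so a Vandermonde determinant gives weight at least `6`. Conversely, balls
of radius `3` around the codewords of a code of this dimension cannot be disjoint, because
`2 ^ (8 * s + 1) < n.choose 3` already for `s ≥ 4`.
-/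

/-! ### Hamming weight -/

section HammingWeight

variable {ι : Type*} [Fintype ι]

lemma lt_hammingNorm_of_forall_sum_mul_pow_eq_zero {R : Type*} [CommRing R] [IsDomain R]
    [DecidableEq R] {f v : ι → R} (hf : Function.Injective f) (hv : v ≠ 0) {d : ℕ}
    (h : ∀ j < d, ∑ i, v i * f i ^ j = 0) : d < hammingNorm v := by
  by_contra! hle
  let S : Finset ι := {i | v i ≠ 0}
  let e : Fin #S ≃ S := S.equivFin.symm
  have hvS : (fun k ↦ v (e k)) = 0 := by
    refine Matrix.eq_zero_of_forall_pow_sum_mul_pow_eq_zero (f := fun k ↦ f (e k))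
      (hf.comp (Subtype.val_injective.comp e.injective)) fun j ↦ ?_
    calc ∑ k, v (e k) * f (e k) ^ (j : ℕ)
        = ∑ i : S, v i * f i ^ (j : ℕ) := e.sum_comp fun i : S ↦ v i * f i ^ (j : ℕ)
      _ = ∑ i ∈ S, v i * f i ^ (j : ℕ) := S.sum_coe_sort fun i ↦ v i * f i ^ (j : ℕ)
      _ = ∑ i, v i * f i ^ (j : ℕ) := sum_subset S.subset_univ fun i _ hi ↦ by simp_all [S]
      _ = 0 := h j (j.2.trans_le hle)
  obtain ⟨i, hi⟩ := Function.ne_iff.mp hv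
  have hiS : i ∈ S := by simpa [S] using hi
  exact hi (by simpa using congrFun hvS (e.symm ⟨i, hiS⟩))

lemma card_filter_hammingNorm_eq [DecidableEq ι] (w : ℕ) :
    #{c : ι → ZMod 2 | hammingNorm c = w} = (Fintype.card ι).choose w := by
  rw [← card_univ, ← card_powersetCard]
  refine card_nbij' (fun c ↦ ({i | c i ≠ 0} : Finset ι)) (fun A i ↦ if i ∈ A then 1 else 0)
    ?_ ?_ ?_ ?_
  · intro c hc
    simpa [mem_powersetCard, hammingNorm] using hc
  · intro A hA
    simpa [mem_powersetCard, hammingNorm] using hA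
  · intro c _
    funext i
    have zero_or_one : ∀ a : ZMod 2, (if a ≠ 0 then 1 else 0) = a := by decide
    simpa using zero_or_one (c i)
  · intro A _
    ext i
    simp

lemma card_filter_hammingNorm_le [DecidableEq ι] (t : ℕ) :
    #{c : ι → ZMod 2 | hammingNorm c ≤ t} = ∑ w ∈ range (t + 1), (Fintype.card ι).choose w := by
  rw [card_eq_sum_card_fiberwise (f := hammingNorm) (t := range (t + 1))
    fun c hc ↦ by simpa [Nat.lt_succ_iff] using hc]
  refine sum_congr rfl fun w hw ↦ ?_
  rw [← card_filter_hammingNorm_eq, filter_filter]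
  congr 1
  ext c
  simp only [mem_filter, mem_univ, true_and, and_iff_right_iff_imp]
  rintro rfl
  exact Nat.lt_succ_iff.mp (mem_range.mp hw)

/-- If the balls of radius `t` around the codewords were disjoint, the words of weight at most `t`
would lie in different cosets. -/
lemma exists_ne_zero_hammingNorm_le_two_mul {D : Submodule (ZMod 2) (ι → ZMod 2)} {r t : ℕ}
    (hr : Fintype.card ι ≤ Module.finrank (ZMod 2) D + r)
    (ht : 2 ^ r < ∑ w ∈ range (t + 1), (Fintype.card ι).choose w) :
    ∃ c ∈ D, c ≠ 0 ∧ hammingNorm c ≤ 2 * t := by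
  classical
  have : Fintype ((ι → ZMod 2) ⧸ D) := Fintype.ofFinite _
  have hquot : Fintype.card ((ι → ZMod 2) ⧸ D) ≤ 2 ^ r := by
    rw [Module.card_eq_pow_finrank (K := ZMod 2), ZMod.card]
    have hfin := D.finrank_quotient_add_finrank
    rw [Module.finrank_fintype_fun_eq_card] at hfin
    exact Nat.pow_le_pow_right two_pos (by omega)
  obtain ⟨x, hx, y, hy, hxy, heq⟩ := exists_ne_map_eq_of_card_lt_of_maps_to
    (s := {c : ι → ZMod 2 | hammingNorm c ≤ t}) (t := univ) (f := D.mkQ)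
    (by rw [card_filter_hammingNorm_le, card_univ]; exact hquot.trans_lt ht)
    fun _ _ ↦ mem_coe.mpr (mem_univ _)
  refine ⟨-x + y, (Submodule.Quotient.eq' D).mp heq, fun h ↦ hxy (neg_add_eq_zero.mp h), ?_⟩
  calc hammingNorm (-x + y) = hammingDist x y := (hammingDist_eq_hammingNorm x y).symm
    _ ≤ hammingDist x 0 + hammingDist 0 y := hammingDist_triangle x 0 y
    _ = hammingNorm x + hammingNorm y := by rw [hammingDist_zero_right, hammingDist_zero_left]
    _ ≤ t + t := add_le_add (mem_filter.mp hx).2 (mem_filter.mp hy).2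
    _ = 2 * t := (two_mul t).symm

lemma minDist_le_hammingNorm {N : ℕ} {C : Submodule (ZMod 2) (Fin N → ZMod 2)}
    {c : Fin N → ZMod 2} (hc : c ∈ C) (hc0 : c ≠ 0) : minDist C ≤ hammingNorm c :=
  Nat.sInf_le ⟨c, hc, hc0, rfl⟩

lemma le_minDist {N d : ℕ} {C : Submodule (ZMod 2) (Fin N → ZMod 2)} (hC : C ≠ ⊥)
    (h : ∀ c ∈ C, c ≠ 0 → d ≤ hammingNorm c) : d ≤ minDist C := by
  obtain ⟨c, hc, hc0⟩ := C.exists_mem_ne_zero_of_ne_bot hC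
  refine le_csInf ⟨_, c, hc, hc0, rfl⟩ ?_
  rintro _ ⟨x, hx, hx0, rfl⟩
  exact h x hx hx0

end HammingWeight

/-! ### Codes cut out by divisibility -/

section WordPolynomial

variable {K : Type*} [Field K] {n : ℕ}

/-- The polynomial `∑ i, c i * X ^ i` of a word `c` of length `n`. -/
noncomputable def wordPolynomial (c : Fin n → K) : K[X] :=
  (degreeLTEquiv K n).symm c

lemma aeval_wordPolynomial {A : Type*} [CommRing A] [Algebra K A] (x : A) (c : Fin n → K) :
    aeval x (wordPolynomial c) = ∑ i, c i • x ^ (i : ℕ) := by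
  simp [wordPolynomial, degreeLTEquiv, aeval_monomial, Algebra.smul_def]

lemma finrank_add_natDegree_eq_of_mem_iff_dvd {C : Submodule K (Fin n → K)} {g : K[X]}
    (hg : g ≠ 0) (hgn : g.natDegree ≤ n) (hC : ∀ c, c ∈ C ↔ g ∣ wordPolynomial c) :
    Module.finrank K C + g.natDegree = n := by
  let φ : (Fin n → K) →ₗ[K] K[X] ⧸ Ideal.span {g} :=
    (Ideal.Quotient.mkₐ K (Ideal.span {g})).toLinearMap ∘ₗ
      (degreeLT K n).subtype ∘ₗ (degreeLTEquiv K n).symm.toLinearMap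
  have hker : LinearMap.ker φ = C := by
    ext c
    rw [hC, ← Ideal.mem_span_singleton, ← Ideal.Quotient.eq_zero_iff_mem]
    rfl
  have hrange : LinearMap.range φ = ⊤ := by
    refine LinearMap.range_eq_top.mpr fun y ↦ ?_
    obtain ⟨p, rfl⟩ := Ideal.Quotient.mk_surjective y
    have hp : p % g ∈ degreeLT K n := mem_degreeLT.mpr <|
      (degree_mod_lt p hg).trans_le (natDegree_le_iff_degree_le.mp hgn)
    refine ⟨degreeLTEquiv K n ⟨p % g, hp⟩, Ideal.Quotient.eq.mpr ?_⟩
    have hmod : p % g - p = -(g * (p / g)) := by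
      rw [EuclideanDomain.mod_eq_sub_mul_div, sub_sub_cancel_left]
    simp [Ideal.mem_span_singleton, hmod]
  have hrank := φ.finrank_range_add_finrank_ker
  rwa [hrange, finrank_top, finrank_quotient_span_eq_natDegree, hker, Module.finrank_fin_fun,
    add_comm] at hrank

end WordPolynomial

/-! ### Minimal polynomials of roots of unity over finite fields -/

section FiniteField

lemma orderOf_natCast_zmod_eq {b k m : ℕ} (hb : 2 ≤ b) (hk : k ≠ 0) (hm : m ∣ b ^ k - 1)
    (hlarge : b ^ (k / 2) ≤ m) : orderOf (b : ZMod m) = k := by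
  have hpow (j : ℕ) : (b : ZMod m) ^ j = 1 ↔ m ∣ b ^ j - 1 := by
    rw [← ZMod.natCast_eq_zero_iff, Nat.cast_sub (Nat.one_le_pow _ _ (by omega)), sub_eq_zero]
    push_cast
    rfl
  have hdvd : orderOf (b : ZMod m) ∣ k := orderOf_dvd_of_pow_eq_one ((hpow k).mpr hm)
  by_contra hne
  have hpos : 0 < orderOf (b : ZMod m) := Nat.pos_of_dvd_of_pos hdvd (by omega)
  obtain ⟨t, ht⟩ := hdvd
  have ht2 : 2 ≤ t := by
    by_contra! h
    interval_cases t <;> omega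
  have hhalf : orderOf (b : ZMod m) ≤ k / 2 := by
    rw [Nat.le_div_iff_mul_le two_pos, ht]
    exact Nat.mul_le_mul_left _ ht2
  have hb_lt : 1 < b ^ orderOf (b : ZMod m) := Nat.one_lt_pow hpos.ne' hb
  have hle : m ≤ b ^ orderOf (b : ZMod m) - 1 :=
    Nat.le_of_dvd (by omega) ((hpow _).mp (pow_orderOf_eq_one _))
  have hmono : b ^ orderOf (b : ZMod m) ≤ b ^ (k / 2) := Nat.pow_le_pow_right (by omega) hhalf
  omega

variable {K L : Type*} [Field K] [Fintype K] [Field L] [Algebra K L]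

lemma natDegree_minpoly_eq_orderOf_card {x : L}
    (hx : (Fintype.card K).Coprime (orderOf x)) :
    (minpoly K x).natDegree = orderOf (Fintype.card K : ZMod (orderOf x)) := by
  obtain ⟨p, _, f, hp, hcard⟩ := FiniteField.card' K
  have : Fact p.Prime := ⟨hp⟩
  have hpx : p.Coprime (orderOf x) := (Nat.coprime_pow_left_iff f.pos _ _).mp (hcard ▸ hx)
  have hpos : 0 < orderOf x := by
    by_contra! h0
    rw [Nat.le_zero.mp h0, Nat.coprime_zero_right] at hx
    exact Fintype.one_lt_card.ne' hx
  have hint : IsIntegral K x := IsIntegral.of_pow hpos (pow_orderOf_eq_one x ▸ isIntegral_one)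
  have hdvd : minpoly K x ∣ cyclotomic (orderOf x) K := minpoly.dvd K x <| by
    rw [aeval_def, ← eval_map, map_cyclotomic]
    exact (IsPrimitiveRoot.orderOf x).isRoot_cyclotomic hpos
  rw [natDegree_of_dvd_cyclotomic_of_irreducible hcard hpx hdvd (minpoly.irreducible hint),
    ← orderOf_units, ZMod.coe_unitOfCoprime, hcard]

lemma natDegree_minpoly_eq_of_le_orderOf {x : L} {k : ℕ} (hk : k ≠ 0)
    (hx : x ^ (Fintype.card K ^ k - 1) = 1) (hlarge : Fintype.card K ^ (k / 2) ≤ orderOf x) :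
    (minpoly K x).natDegree = k := by
  have hdvd : orderOf x ∣ Fintype.card K ^ k - 1 := orderOf_dvd_of_pow_eq_one hx
  have hcoprime : (Fintype.card K).Coprime (orderOf x) := by
    have hpred : (Fintype.card K ^ k).Coprime (Fintype.card K ^ k - 1) :=
      (Nat.coprime_self_sub_right (Nat.one_le_pow _ _ Fintype.card_pos)).mpr
        (Nat.coprime_one_right _)
    exact (hpred.coprime_dvd_left (dvd_pow_self _ hk)).coprime_dvd_right hdvd
  rw [natDegree_minpoly_eq_orderOf_card hcoprime,
    orderOf_natCast_zmod_eq Fintype.one_lt_card hk hdvd hlarge]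

lemma minpoly_pow_card (x : L) : minpoly K (x ^ Fintype.card K) = minpoly K x :=
  minpoly.algHom_eq (FiniteField.frobeniusAlgHom K L) (RingHom.injective _) x

lemma exists_eq_pow_card_pow_of_isConjRoot {x y : L} (hx : IsIntegral K x)
    (h : IsConjRoot K x y) : ∃ i, y = x ^ Fintype.card K ^ i := by
  let E := IntermediateField.adjoin K {x}
  have : FiniteDimensional K E := IntermediateField.adjoin.finiteDimensional hx
  have : Finite E := Module.finite_of_finite K
  let x' : E := ⟨x, IntermediateField.mem_adjoin_simple_self K x⟩
  have hx' : minpoly K x = minpoly K x' :=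
    minpoly.algebraMap_eq (algebraMap E L).injective x'
  obtain ⟨y', rfl⟩ : ∃ y' : E, algebraMap E L y' = y := by
    refine IsIntegral.mem_range_algebraMap_of_minpoly_splits (R := K) (h.isIntegral hx) ?_
    exact h ▸ hx' ▸ Normal.splits inferInstance x'
  have hconj : IsConjRoot K y' x' := (isConjRoot_algHom_iff E.val).mp h.symm
  obtain ⟨σ, rfl⟩ := hconj.exists_algEquiv
  obtain ⟨i, rfl⟩ := (FiniteField.bijective_frobeniusAlgEquivOfAlgebraic_pow K E).2 σ
  refine ⟨i, ?_⟩
  simp only [AlgEquiv.coe_pow, FiniteField.coe_frobeniusAlgEquivOfAlgebraic_iterate, map_pow]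
  rfl

end FiniteField

/-! ### Generator polynomials -/

section GeneratorPolynomial

variable (K : Type*) {L : Type*} [Field K] [Field L] [Algebra K L]

open Classical in
/-- The generator polynomial of the cyclic code with check set `J`: the product of the distinct
minimal polynomials of the powers `β ^ j` with `j ∈ J`, which is also their least common
multiple. -/
noncomputable def generatorPolynomial (β : L) (J : Finset ℕ) : K[X] :=
  ∏ m ∈ J.image fun j ↦ minpoly K (β ^ j), m

variable {K} {β : L} {J : Finset ℕ}

lemma generatorPolynomial_dvd_iff (hβ : IsIntegral K β) {p : K[X]} :
    generatorPolynomial K β J ∣ p ↔ ∀ j ∈ J, aeval (β ^ j) p = 0 := by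
  classical
  simp only [generatorPolynomial, ← minpoly.dvd_iff]
  have hirr (j : ℕ) : Irreducible (minpoly K (β ^ j)) := minpoly.irreducible (hβ.pow j)
  have hmonic (j : ℕ) : (minpoly K (β ^ j)).Monic := minpoly.monic (hβ.pow j)
  refine ⟨fun h j hj ↦ (dvd_prod_of_mem (fun m : K[X] ↦ m)
    (mem_image_of_mem _ hj)).trans h, fun h ↦ ?_⟩
  refine prod_dvd_of_coprime ?_ (forall_mem_image.mpr h)
  simp only [coe_image, Set.Pairwise, Set.forall_mem_image]
  intro i _ j _ hne
  refine ((hirr i).isCoprime_or_dvd _).resolve_right fun hdvd ↦ hne ?_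
  exact eq_of_monic_of_associated (hmonic i) (hmonic j) ((hirr i).associated_of_dvd (hirr j) hdvd)

lemma natDegree_generatorPolynomial_eq_sum (hβ : IsIntegral K β) {I : Finset ℕ} (hIJ : I ⊆ J)
    (hJ : ∀ j ∈ J, ∃ i ∈ I, minpoly K (β ^ i) = minpoly K (β ^ j))
    (hinj : Set.InjOn (fun i ↦ minpoly K (β ^ i)) I) :
    (generatorPolynomial K β J).natDegree = ∑ i ∈ I, (minpoly K (β ^ i)).natDegree := by
  classical
  have himage : J.image (fun j ↦ minpoly K (β ^ j)) = I.image fun i ↦ minpoly K (β ^ i) := by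
    refine (image_subset_iff.mpr fun j hj ↦ ?_).antisymm (image_subset_image hIJ)
    obtain ⟨i, hi, hij⟩ := hJ j hj
    exact mem_image.mpr ⟨i, hi, hij⟩
  rw [generatorPolynomial, himage, prod_image hinj]
  exact natDegree_prod_of_monic _ _ fun i _ ↦ minpoly.monic (hβ.pow i)

end GeneratorPolynomial

/-! ### BCH codes -/

section BCHCode

variable {F : Type} [Field F] [Algebra (ZMod 2) F] {n : ℕ} {β : F} {J : Finset ℕ}

lemma lt_hammingNorm_of_mem_BCHCode {b d : ℕ} (hβ : n ≤ orderOf β) (hJ : Ico b (b + d) ⊆ J)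
    {c : Fin n → ZMod 2} (hc : c ∈ BCHCode n β J) (hc0 : c ≠ 0) : d < hammingNorm c := by
  classical
  have hβ0 : β ≠ 0 := by
    rintro rfl
    obtain ⟨i, -⟩ := Function.ne_iff.mp hc0
    exact (Fin.pos i).not_ge (by simpa using hβ)
  let v : Fin n → F := fun i ↦ c i • β ^ (b * (i : ℕ))
  have hnorm : hammingNorm v = hammingNorm c :=
    hammingNorm_comp (fun (i : Fin n) (a : ZMod 2) ↦ a • β ^ (b * (i : ℕ)))
      (fun _ ↦ smul_left_injective _ (pow_ne_zero _ hβ0)) fun _ ↦ zero_smul _ _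
  have hinj : Function.Injective fun i : Fin n ↦ β ^ (i : ℕ) := fun i j hij ↦
    Fin.ext (pow_injOn_Iio_orderOf (i.2.trans_le hβ) (j.2.trans_le hβ) hij)
  rw [← hnorm]
  refine lt_hammingNorm_of_forall_sum_mul_pow_eq_zero hinj ?_ fun j hj ↦ ?_
  · rwa [← hammingNorm_ne_zero_iff, hnorm, hammingNorm_ne_zero_iff]
  · have hcheck := hc (b + j) (hJ (mem_Ico.mpr ⟨by omega, by omega⟩))
    simpa only [v, smul_mul_assoc, ← pow_mul, ← pow_add, add_mul, mul_comm _ j] using hcheck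

lemma mem_BCHCode_iff_aeval_eq_zero {c : Fin n → ZMod 2} :
    c ∈ BCHCode n β J ↔ ∀ j ∈ J, aeval (β ^ j) (wordPolynomial c) = 0 := by
  simp only [aeval_wordPolynomial, ← pow_mul]
  rfl

lemma finrank_BCHCode_add_natDegree_generatorPolynomial (hn : n ≠ 0) (hβ : β ^ n = 1) :
    Module.finrank (ZMod 2) (BCHCode n β J) + (generatorPolynomial (ZMod 2) β J).natDegree = n := by
  have hint : IsIntegral (ZMod 2) β :=
    IsIntegral.of_pow (Nat.pos_of_ne_zero hn) (hβ ▸ isIntegral_one)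
  have hdvd : generatorPolynomial (ZMod 2) β J ∣ X ^ n - 1 :=
    (generatorPolynomial_dvd_iff hint).mpr fun j _ ↦ by
      simp [← pow_mul, mul_comm j, pow_mul β n, hβ]
  have hX : (X ^ n - 1 : (ZMod 2)[X]) ≠ 0 := (monic_X_pow_sub_C 1 hn).ne_zero
  refine finrank_add_natDegree_eq_of_mem_iff_dvd (ne_zero_of_dvd_ne_zero hX hdvd) ?_ fun c ↦ ?_
  · exact (natDegree_le_of_dvd hdvd hX).trans_eq (natDegree_X_pow_sub_C (r := 1))
  · rw [mem_BCHCode_iff_aeval_eq_zero, generatorPolynomial_dvd_iff hint]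

lemma natDegree_generatorPolynomial_zero_to_four (hβ : IsIntegral (ZMod 2) β) (h1 : β ≠ 1)
    (h3 : β ^ 3 ≠ 1) (hne : minpoly (ZMod 2) β ≠ minpoly (ZMod 2) (β ^ 3)) :
    (generatorPolynomial (ZMod 2) β {0, 1, 2, 3, 4}).natDegree =
      1 + (minpoly (ZMod 2) β).natDegree + (minpoly (ZMod 2) (β ^ 3)).natDegree := by
  have hsq (x : F) : minpoly (ZMod 2) (x ^ 2) = minpoly (ZMod 2) x := by
    simpa only [ZMod.card] using minpoly_pow_card (K := ZMod 2) x
  have h4 : minpoly (ZMod 2) (β ^ 4) = minpoly (ZMod 2) β := by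
    rw [show 4 = 2 * 2 from rfl, pow_mul, hsq, hsq]
  have hone {x : F} (hx : x ≠ 1) : minpoly (ZMod 2) x ≠ X - 1 := fun h ↦
    hx (sub_eq_zero.mp (by simpa [h] using minpoly.aeval (ZMod 2) x))
  have hinj : Set.InjOn (fun j ↦ minpoly (ZMod 2) (β ^ j)) ({0, 1, 3} : Finset ℕ) := by
    simp [Set.InjOn, hone h1, hone h3, (hone h1).symm, (hone h3).symm, hne, hne.symm]
  have hX : (X - 1 : (ZMod 2)[X]).natDegree = 1 := natDegree_X_sub_C 1
  rw [natDegree_generatorPolynomial_eq_sum hβ (by decide) (by simp [hsq, h4]) hinj]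
  simp [hX, add_assoc]

end BCHCode

/-! ### The length `(2 ^ (2 * s) + 1) * (2 ^ s - 1)` -/

section Length

variable {s : ℕ}

lemma length_mul_two_pow_add_one (s : ℕ) :
    (2 ^ (2 * s) + 1) * (2 ^ s - 1) * (2 ^ s + 1) = 2 ^ (4 * s) - 1 := by
  obtain ⟨r, hr⟩ := Nat.exists_eq_add_of_le' (Nat.one_le_two_pow (n := s))
  have hsq : 2 ^ (2 * s) = (r + 1) ^ 2 := by rw [← hr]; ring
  have hfourth : 2 ^ (4 * s) = (r + 1) ^ 4 := by rw [← hr]; ring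
  rw [hsq, hfourth, hr, Nat.add_sub_cancel]
  refine Nat.eq_sub_of_add_eq ?_
  ring

lemma orderOf_pow_two_pow_add_one {M : Type*} [Monoid M] {a : M}
    (ha : orderOf a = 2 ^ (4 * s) - 1) :
    orderOf (a ^ (2 ^ s + 1)) = (2 ^ (2 * s) + 1) * (2 ^ s - 1) := by
  rw [← length_mul_two_pow_add_one] at ha
  rw [orderOf_pow_of_dvd (Nat.succ_ne_zero _) (ha ▸ dvd_mul_left _ _), ha,
    Nat.mul_div_cancel _ (Nat.succ_pos _)]

lemma not_two_pow_modEq_three (hs : 3 ≤ s) (i : ℕ) : ¬ 2 ^ i ≡ 3 [MOD 2 ^ s - 1] := by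
  intro h
  have h8 : 2 ^ 3 ≤ 2 ^ s := Nat.pow_le_pow_right two_pos hs
  have hperiod : 2 ^ s ≡ 1 [MOD 2 ^ s - 1] :=
    ((Nat.modEq_iff_dvd' Nat.one_le_two_pow).mpr dvd_rfl).symm
  have hreduce : 2 ^ i ≡ 2 ^ (i % s) [MOD 2 ^ s - 1] := by
    conv_lhs => rw [← Nat.div_add_mod i s, pow_add, pow_mul]
    simpa using (hperiod.pow (i / s)).mul_right (2 ^ (i % s))
  have hlt : 2 * 2 ^ (i % s) ≤ 2 ^ s := by
    rw [← pow_succ']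
    exact Nat.pow_le_pow_right two_pos (Nat.mod_lt i (by omega))
  have heq : 2 ^ (i % s) = 3 := (hreduce.symm.trans h).eq_of_lt_of_lt (by omega) (by omega)
  have hdvd : 3 ∣ 2 ^ (i % s) := dvd_of_eq heq.symm
  exact absurd (Nat.prime_three.dvd_of_dvd_pow hdvd) (by decide)

lemma three_mul_two_pow_le_length (hs : 2 ≤ s) :
    3 * 2 ^ (2 * s) ≤ (2 ^ (2 * s) + 1) * (2 ^ s - 1) := by
  have h4 : 2 ^ 2 ≤ 2 ^ s := Nat.pow_le_pow_right two_pos hs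
  rw [mul_comm]
  exact Nat.mul_le_mul (by omega) (by omega)

lemma two_pow_lt_length_choose_three (hs : 4 ≤ s) :
    2 ^ (8 * s + 1) < ((2 ^ (2 * s) + 1) * (2 ^ s - 1)).choose 3 := by
  obtain ⟨r, hr⟩ := Nat.exists_eq_add_of_le' (Nat.one_le_two_pow (n := s))
  have hr15 : 15 ≤ r := by
    have : 2 ^ 4 ≤ 2 ^ s := Nat.pow_le_pow_right two_pos hs
    omega
  have hsq : 2 ^ (2 * s) = (r + 1) ^ 2 := by rw [← hr]; ring
  have hpow : 2 ^ (8 * s + 1) = 2 * (r + 1) ^ 8 := by rw [← hr]; ring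
  rw [hsq, hpow, hr, Nat.add_sub_cancel]
  set n := ((r + 1) ^ 2 + 1) * r with hn
  have hcube : 12 * (r + 1) ^ 2 < r ^ 3 := by nlinarith [Nat.mul_le_mul hr15 hr15]
  refine lt_of_mul_lt_mul_left (a := 6) ?_ (by norm_num)
  calc 6 * (2 * (r + 1) ^ 8) = 12 * (r + 1) ^ 2 * (r + 1) ^ 6 := by ring
    _ < r ^ 3 * (r + 1) ^ 6 := by gcongr
    _ = ((r + 1) ^ 2 * r) ^ 3 := by ring
    _ ≤ (n + 1 - 3) ^ 3 := by
      refine Nat.pow_le_pow_left ?_ 3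
      rw [hn, add_one_mul]
      omega
    _ ≤ n.descFactorial 3 := Nat.pow_sub_le_descFactorial n 3
    _ = 6 * n.choose 3 := Nat.descFactorial_eq_factorial_mul_choose n 3

end Length

/-! ### The code with check set `{0, 1, 2, 3, 4}` -/

section Main

variable {F : Type} [Field F] [Algebra (ZMod 2) F] {s n : ℕ} {β : F}

lemma natDegree_minpoly_eq_four_mul (hs : s ≠ 0) {x : F} (hx : x ^ (2 ^ (4 * s) - 1) = 1)
    (hlarge : 2 ^ (2 * s) ≤ orderOf x) : (minpoly (ZMod 2) x).natDegree = 4 * s :=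
  natDegree_minpoly_eq_of_le_orderOf (by omega) (by rwa [ZMod.card])
    (by rwa [ZMod.card, show 4 * s / 2 = 2 * s by omega])

lemma minpoly_ne_minpoly_pow_three (hs : 3 ≤ s) (hβ : IsOfFinOrder β)
    (hdvd : 2 ^ s - 1 ∣ orderOf β) : minpoly (ZMod 2) β ≠ minpoly (ZMod 2) (β ^ 3) := by
  intro h
  have hint : IsIntegral (ZMod 2) β :=
    IsIntegral.of_pow hβ.orderOf_pos (pow_orderOf_eq_one β ▸ isIntegral_one)
  obtain ⟨i, hi⟩ := exists_eq_pow_card_pow_of_isConjRoot hint h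
  rw [ZMod.card, hβ.pow_eq_pow_iff_modEq] at hi
  exact not_two_pow_modEq_three hs i (hi.of_dvd hdvd).symm

lemma finrank_BCHCode_zero_to_four_add (hs : 3 ≤ s) (hn : n = (2 ^ (2 * s) + 1) * (2 ^ s - 1))
    (hβ : orderOf β = n) :
    Module.finrank (ZMod 2) (BCHCode n β {0, 1, 2, 3, 4}) + (8 * s + 1) = n := by
  have hlarge : 3 * 2 ^ (2 * s) ≤ orderOf β :=
    hβ ▸ hn ▸ three_mul_two_pow_le_length (by omega)
  have hpos : 1 < 2 ^ (2 * s) := Nat.one_lt_two_pow (by omega)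
  have hβn : β ^ n = 1 := hβ ▸ pow_orderOf_eq_one β
  have hroot : β ^ (2 ^ (4 * s) - 1) = 1 := by
    rw [← length_mul_two_pow_add_one, ← hn, pow_mul, hβn, one_pow]
  have hfin : IsOfFinOrder β := orderOf_pos_iff.mp (by omega)
  have hlarge3 : 2 ^ (2 * s) ≤ orderOf (β ^ 3) := by
    have hle : orderOf β ≤ 3 * orderOf (β ^ 3) :=
      orderOf_le_of_pow_eq_one (Nat.mul_pos three_pos hfin.pow.orderOf_pos)
        (by rw [pow_mul, pow_orderOf_eq_one])
    omega
  have hint : IsIntegral (ZMod 2) β :=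
    IsIntegral.of_pow (n := n) (by omega) (hβn ▸ isIntegral_one)
  have hdim := finrank_BCHCode_add_natDegree_generatorPolynomial (J := {0, 1, 2, 3, 4})
    (by omega) hβn
  rw [natDegree_generatorPolynomial_zero_to_four hint
    (fun h ↦ by rw [h, orderOf_one] at hlarge; omega)
    (fun h ↦ by rw [h, orderOf_one] at hlarge3; omega)
    (minpoly_ne_minpoly_pow_three hs hfin (hβ ▸ hn ▸ dvd_mul_left _ _)),
    natDegree_minpoly_eq_four_mul (by omega) hroot (by omega),
    natDegree_minpoly_eq_four_mul (by omega) (by rw [← pow_mul, mul_comm, pow_mul, hroot, one_pow])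
      hlarge3] at hdim
  omega

lemma minDist_le_six_of_le_finrank_add (hs : 4 ≤ s) (hn : n = (2 ^ (2 * s) + 1) * (2 ^ s - 1))
    {D : Submodule (ZMod 2) (Fin n → ZMod 2)} (hD : n ≤ Module.finrank (ZMod 2) D + (8 * s + 1)) :
    minDist D ≤ 6 := by
  obtain ⟨c, hc, hc0, hle⟩ := exists_ne_zero_hammingNorm_le_two_mul (D := D) (t := 3)
    (r := 8 * s + 1) (by rwa [Fintype.card_fin]) <| by
      rw [Fintype.card_fin]
      calc 2 ^ (8 * s + 1) < n.choose 3 := hn ▸ two_pow_lt_length_choose_three hs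
        _ ≤ ∑ w ∈ range (3 + 1), n.choose w :=
          single_le_sum (f := n.choose) (fun _ _ ↦ Nat.zero_le _) (self_mem_range_succ 3)
  exact (minDist_le_hammingNorm hc hc0).trans hle

end Main

theorem stmt_6_general {F : Type} [Field F] [Algebra (ZMod 2) F] {s n : ℕ} (hs : 4 ≤ s)
    (hn : n = (2 ^ (2 * s) + 1) * (2 ^ s - 1)) {β : F} (hβ : orderOf β = n) :
    Module.finrank (ZMod 2) (BCHCode n β {0, 1, 2, 3, 4}) = n - 8 * s - 1 ∧
    minDist (BCHCode n β {0, 1, 2, 3, 4}) = 6 ∧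
    ∀ D : Submodule (ZMod 2) (Fin n → ZMod 2),
      Module.finrank (ZMod 2) D = n - 8 * s - 1 → minDist D ≤ 6 := by
  have hdim := finrank_BCHCode_zero_to_four_add (by omega) hn hβ
  have hne : BCHCode n β {0, 1, 2, 3, 4} ≠ ⊥ := by
    intro hbot
    rw [hbot, finrank_bot, zero_add] at hdim
    have hsmall : n.choose 3 ≤ 2 ^ (8 * s + 1) := hdim ▸ Nat.choose_le_two_pow n 3
    exact (hn ▸ two_pow_lt_length_choose_three hs).not_ge hsmall
  have hlower : 6 ≤ minDist (BCHCode n β {0, 1, 2, 3, 4}) :=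
    le_minDist hne fun c hc hc0 ↦
      lt_hammingNorm_of_mem_BCHCode (b := 0) (d := 5) hβ.ge (by decide) hc hc0
  have hupper {D : Submodule (ZMod 2) (Fin n → ZMod 2)}
      (hD : n ≤ Module.finrank (ZMod 2) D + (8 * s + 1)) : minDist D ≤ 6 :=
    minDist_le_six_of_le_finrank_add hs hn hD
  exact ⟨by omega, (hupper hdim.ge).antisymm hlower, fun D hD ↦ hupper (by omega)⟩

theorem stmt_6 (s : ℕ) (hs : 8 ≤ s) (n : ℕ) (hn : n = (2 ^ (2 * s) + 1) * (2 ^ s - 1))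
    (α : GaloisField 2 (4 * s)) (hα : orderOf α = 2 ^ (4 * s) - 1)
    (β : GaloisField 2 (4 * s)) (hβ : β = α ^ (2 ^ s + 1)) :
    Module.finrank (ZMod 2) (BCHCode n β {0, 1, 2, 3, 4}) = n - 8 * s - 1 ∧
    minDist (BCHCode n β {0, 1, 2, 3, 4}) = 6 ∧
    ∀ D : Submodule (ZMod 2) (Fin n → ZMod 2),
      Module.finrank (ZMod 2) D = n - 8 * s - 1 → minDist D ≤ 6 :=
  stmt_6_general (by omega) hn (hβ ▸ hn ▸ orderOf_pow_two_pow_add_one hα)
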